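/- arXiv:0804.1945 — 2 statements merged into one kernel-verified Lean document; each statement's English description precedes it below -/
import Mathlib

section
/- Let S ⊂ ℝ^k be a halfspace and let Σ ⊆ S be an additive semigroup containing 0 (i.e., λ, μ ∈ Σ implies λ + μ ∈ Σ). Then the unital Banach algebra AP^k_Σ of almost periodic functions with Bohr-Fourier spectrum in Σ is an Hermite ring. -/
/- Almost periodic functions of `k` real variables, their Bohr-Fourier
coefficients and spectra, the Wiener algebra, and halfspaces. -/

open MeasureTheory Filter BoundedContinuousFunction

noncomputable section

/-- The Banach algebra of bounded continuous functions `ℝ^k → ℂ` (sup norm). -/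
abbrev APB (k : ℕ) := BoundedContinuousFunction (Fin k → ℝ) ℂ

/-- The elementary exponential `e_λ(x) = e^{i⟨λ,x⟩}` as a bounded continuous function. -/
def apExp (k : ℕ) (lam : Fin k → ℝ) : APB k :=
  BoundedContinuousFunction.ofNormedAddCommGroup
    (fun x => Complex.exp (Complex.I * ((∑ j, lam j * x j : ℝ) : ℂ)))
    (by fun_prop) 1
    (fun x => by
      simp [Complex.norm_exp, Complex.mul_re])

/-- `AP^k`: the closed subalgebra of `L^∞`-type bounded continuous functions
generated by all exponentials `e_λ`, `λ ∈ ℝ^k`. -/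
def APalg (k : ℕ) : Subalgebra ℂ (APB k) :=
  (Algebra.adjoin ℂ (Set.range (apExp k))).topologicalClosure

/-- The Bohr-Fourier coefficient
`f_λ = lim_{T→∞} (2T)^{-k} ∫_{[-T,T]^k} e^{-i⟨λ,x⟩} f(x) dx`. -/
def bohrCoeff (k : ℕ) (f : (Fin k → ℝ) → ℂ) (lam : Fin k → ℝ) : ℂ :=
  limUnder atTop (fun T : ℝ =>
    (((2 * T) ^ k : ℝ) : ℂ)⁻¹ *
      ∫ x in Set.Icc (fun _ => -T : Fin k → ℝ) (fun _ => T),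
        Complex.exp (-(Complex.I * ((∑ j, lam j * x j : ℝ) : ℂ))) * f x)

/-- The Bohr-Fourier spectrum `σ(f) = {λ : f_λ ≠ 0}`. -/
def bohrSpectrum (k : ℕ) (f : (Fin k → ℝ) → ℂ) : Set (Fin k → ℝ) :=
  {lam | bohrCoeff k f lam ≠ 0}

/-- Membership in `AP^k_Δ = {f ∈ AP^k : σ(f) ⊆ Δ}`. -/
def APmem (k : ℕ) (Δ : Set (Fin k → ℝ)) (f : APB k) : Prop :=
  f ∈ APalg k ∧ bohrSpectrum k ⇑f ⊆ Δ

/-- Membership in the Wiener algebra `APW^k_Δ`: almost periodic with spectrum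
in `Δ` and absolutely convergent Bohr-Fourier series. -/
def APWmem (k : ℕ) (Δ : Set (Fin k → ℝ)) (f : APB k) : Prop :=
  APmem k Δ f ∧ Summable (fun lam => ‖bohrCoeff k (⇑f) lam‖)

/-- The Wiener norm `‖f‖_W = ∑_λ |f_λ|`. -/
def wienerNorm (k : ℕ) (f : (Fin k → ℝ) → ℂ) : ℝ :=
  ∑' lam, ‖bohrCoeff k f lam‖

/-- A halfspace `S ⊂ ℝ^k`: `ℝ^k = S ∪ (-S)`, `S ∩ (-S) = {0}`, and `S` is
closed under addition and under multiplication by nonnegative reals. -/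
structure IsHalfspace (k : ℕ) (S : Set (Fin k → ℝ)) : Prop where
  union : S ∪ -S = Set.univ
  inter : S ∩ -S = {0}
  add_mem : ∀ x ∈ S, ∀ y ∈ S, x + y ∈ S
  smul_mem : ∀ x ∈ S, ∀ a : ℝ, 0 ≤ a → a • x ∈ S

/-! ### Rows equivalent under the general linear group -/

/-- Two rows are equivalent if an invertible matrix carries the first to the second. -/
def RowEquiv {n R : Type*} [Fintype n] [DecidableEq n] [CommRing R] (a a' : n → R) : Prop :=
  ∃ G : Matrix n n R, IsUnit G ∧ Matrix.vecMul a G = a'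

section RowEquiv

variable {n R : Type*} [Fintype n] [DecidableEq n] [CommRing R]

theorem RowEquiv.trans {a b c : n → R} (hab : RowEquiv a b) (hbc : RowEquiv b c) :
    RowEquiv a c := by
  obtain ⟨G, hG, rfl⟩ := hab
  obtain ⟨H, hH, rfl⟩ := hbc
  exact ⟨G * H, hG.mul hH, by rw [Matrix.vecMul_vecMul]⟩

/-- Two rows having invertible pairing with a common column are equivalent. -/
theorem RowEquiv.of_isUnit_dotProduct {a a' b : n → R} (h : IsUnit (a ⬝ᵥ b))
    (h' : IsUnit (a' ⬝ᵥ b)) : RowEquiv a a' := by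
  obtain ⟨u, hu⟩ := h
  have hb : a ⬝ᵥ ((↑u⁻¹ : R) • b) = 1 := by
    rw [dotProduct_smul, ← hu, smul_eq_mul, Units.inv_mul]
  refine ⟨1 + Matrix.replicateCol Unit ((↑u⁻¹ : R) • b) * Matrix.replicateRow Unit (a' - a),
    ?_, ?_⟩
  · rw [Matrix.isUnit_iff_isUnit_det, Matrix.det_one_add_replicateCol_mul_replicateRow,
      sub_dotProduct, hb, add_sub_cancel, dotProduct_smul, smul_eq_mul]
    exact (u⁻¹).isUnit.mul h'
  · have : Matrix.vecMul a (Matrix.replicateCol Unit ((↑u⁻¹ : R) • b)) = 1 := by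
      ext; exact hb
    rw [Matrix.vecMul_add, Matrix.vecMul_one, ← Matrix.vecMul_vecMul, this]
    ext j
    simp [Matrix.vecMul, dotProduct]

/-- A nonzero row over a field, mapped into an algebra, is equivalent to a unit row. -/
theorem RowEquiv.single_algebraMap {K : Type*} [Field K] [Algebra K R] (i : n) {c : n → K}
    (hc : c ≠ 0) : RowEquiv (Pi.single i (1 : R)) (fun j => algebraMap K R (c j)) := by
  obtain ⟨j, hj⟩ := Function.ne_iff.mp hc
  have hunit : ∀ l, c l ≠ 0 → IsUnit (algebraMap K R (c l)) := fun l hl =>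
    (isUnit_iff_ne_zero.mpr hl).map (algebraMap K R)
  by_cases hi : c i = 0
  · have hij : i ≠ j := fun h => hj (h ▸ hi)
    refine RowEquiv.of_isUnit_dotProduct (b := Pi.single i 1 + Pi.single j 1) ?_ ?_
    · simp [hij]
    · simpa [hi] using hunit j hj
  · refine RowEquiv.of_isUnit_dotProduct (b := Pi.single i 1) ?_ ?_
    · simp
    · simpa using hunit i hi

/-- The rows along a path of unimodular rows are all equivalent. -/
theorem RowEquiv.of_path {A X : Type*} [NormedCommRing A] [CompleteSpace A]
    [TopologicalSpace X] [PreconnectedSpace X] {p q : X → n → A} (hp : Continuous p)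
    (hpq : ∀ t, IsUnit (p t ⬝ᵥ q t)) (s t : X) : RowEquiv (p s) (p t) := by
  refine PreconnectedSpace.induction₂' (fun s t => RowEquiv (p s) (p t)) (fun s => ?_)
    ⟨fun _ _ _ => RowEquiv.trans⟩ s t
  have hc : Continuous fun t => p t ⬝ᵥ q s := by
    unfold dotProduct
    fun_prop
  have hopen : ∀ᶠ t in nhds s, IsUnit (p t ⬝ᵥ q s) :=
    hc.continuousAt.eventually (Units.isOpen.mem_nhds (hpq s))
  filter_upwards [hopen] with t ht
  exact ⟨.of_isUnit_dotProduct (hpq s) ht, .of_isUnit_dotProduct ht (hpq s)⟩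

end RowEquiv

/-! ### Almost invariant finite sets in abelian groups -/

open Finset in
/-- A finite set of translations of an abelian group admits nonempty finite sets that are
almost invariant under all of them. -/
theorem exists_finset_almost_invariant {G : Type*} [AddCommGroup G] [DecidableEq G]
    (F : Finset G) {δ : ℝ} (hδ : 0 < δ) :
    ∃ B : Finset G, B.Nonempty ∧
      ∀ μ ∈ F, (1 - δ) * (#B : ℝ) ≤ #{β ∈ B | μ + β ∈ B} := by
  let B : ℕ → Finset G := fun N =>
    (Fintype.piFinset fun _ : F => range (N + 1)).image fun n => ∑ μ : F, n μ • (μ : G)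
  have hmono : ∀ N, B N ⊆ B (N + 1) := fun N =>
    image_subset_image <| Fintype.piFinset_subset _ _ fun _ => range_mono (by lia)
  have hzero : ∀ N, (0 : G) ∈ B N := fun N =>
    mem_image.mpr ⟨0, by simp, by simp⟩
  have htrans : ∀ N, ∀ μ ∈ F, (B N).image (μ + ·) ⊆ B (N + 1) := by
    intro N μ hμ x hx
    obtain ⟨β, hβ, rfl⟩ := mem_image.mp hx
    obtain ⟨n, hn, rfl⟩ := mem_image.mp hβ
    refine mem_image.mpr ⟨n + Pi.single ⟨μ, hμ⟩ 1, ?_, ?_⟩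
    · simp only [Fintype.mem_piFinset, mem_range, Pi.add_apply] at hn ⊢
      intro ν
      have : (Pi.single (⟨μ, hμ⟩ : F) 1 : F → ℕ) ν ≤ 1 := by
        rw [Pi.single_apply]; split_ifs <;> simp
      have := hn ν
      lia
    · simp [add_smul, sum_add_distrib, Pi.single_apply, add_comm]
  have hcard : ∀ N, (#(B N) : ℝ) ≤ ((N + 1 : ℕ) : ℝ) ^ #F := by
    intro N
    have : #(B N) ≤ (N + 1) ^ #F := card_image_le.trans (by simp)
    exact_mod_cast this
  obtain ⟨N, hN⟩ : ∃ N, (#(B (N + 1)) : ℝ) ≤ (1 + δ) * #(B N) := by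
    by_contra! hcon
    have hgrow : ∀ N, (1 + δ) ^ N ≤ (#(B N) : ℝ) := by
      intro N
      induction N with
      | zero => simpa using ⟨0, hzero 0⟩
      | succ N ih =>
        rw [pow_succ']
        exact (mul_le_mul_of_nonneg_left ih (by positivity)).trans (hcon N).le
    have hlim := (tendsto_pow_const_div_const_pow_of_one_lt #F
      (show 1 < 1 + δ by linarith)).comp (tendsto_add_atTop_nat 1)
    obtain ⟨N, hN⟩ := (hlim.eventually_lt_const (show 0 < (1 + δ)⁻¹ by positivity)).exists
    have hpos : 0 < (1 + δ) ^ N := by positivity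
    have h1 := (hgrow N).trans (hcard N)
    rw [Function.comp_apply, div_lt_iff₀ (by positivity), pow_succ', inv_mul_cancel_left₀
      (by positivity)] at hN
    linarith
  refine ⟨B N, ⟨0, hzero N⟩, fun μ hμ => ?_⟩
  have hinter : #((B N).image (μ + ·) ∩ B N) = #{β ∈ B N | μ + β ∈ B N} := by
    rw [← filter_mem_eq_inter, filter_image, card_image_of_injective _ (add_right_injective μ)]
  have hunion : #((B N).image (μ + ·) ∪ B N) ≤ #(B (N + 1)) :=
    card_le_card (union_subset (htrans N μ hμ) (hmono N))
  have hsum := card_union_add_card_inter ((B N).image (μ + ·)) (B N)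
  rw [card_image_of_injective _ (add_right_injective μ), hinter] at hsum
  have hsum' : (#((B N).image (μ + ·) ∪ B N) : ℝ) + #{β ∈ B N | μ + β ∈ B N}
      = #(B N) + #(B N) := mod_cast hsum
  have hunion' : (#((B N).image (μ + ·) ∪ B N) : ℝ) ≤ #(B (N + 1)) := mod_cast hunion
  linarith

/-! ### Finite subsets of a halfspace -/

theorem IsHalfspace.eq_zero_of_add_eq_zero {k : ℕ} {S : Set (Fin k → ℝ)} (hS : IsHalfspace k S)
    {x y : Fin k → ℝ} (hx : x ∈ S) (hy : y ∈ S) (hxy : x + y = 0) : x = 0 := by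
  have : x ∈ S ∩ -S := ⟨hx, by rwa [Set.mem_neg, neg_eq_of_add_eq_zero_right hxy]⟩
  rwa [hS.inter] at this

/-- A finite subset of a halfspace lies, up to the origin, in an open linear halfspace. -/
theorem IsHalfspace.exists_dotProduct_pos {k : ℕ} {S : Set (Fin k → ℝ)} (hS : IsHalfspace k S)
    {F : Set (Fin k → ℝ)} (hF : F.Finite) (hFS : F ⊆ S) :
    ∃ v : Fin k → ℝ, ∀ x ∈ F, x = 0 ∨ 0 < x ⬝ᵥ v := by
  have hconv : Convex ℝ (S \ {0}) := by
    rintro x ⟨hx, hx0⟩ y ⟨hy, hy0⟩ a b ha hb hab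
    refine ⟨hS.add_mem _ (hS.smul_mem x hx a ha) _ (hS.smul_mem y hy b hb), fun h => ?_⟩
    have h1 := hS.eq_zero_of_add_eq_zero (hS.smul_mem x hx a ha) (hS.smul_mem y hy b hb) h
    have h2 := hS.eq_zero_of_add_eq_zero (hS.smul_mem y hy b hb) (hS.smul_mem x hx a ha)
      ((add_comm _ _).trans h)
    have ha0 : a = 0 := (smul_eq_zero.mp h1).resolve_right hx0
    have hb0 : b = 0 := (smul_eq_zero.mp h2).resolve_right hy0
    simp [ha0, hb0] at hab
  have hsub : convexHull ℝ (F \ {0}) ⊆ S \ {0} :=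
    convexHull_min (Set.sdiff_subset_sdiff_left hFS) hconv
  obtain ⟨f, u, hu, hf⟩ := geometric_hahn_banach_point_closed (convex_convexHull ℝ (F \ {0}))
    ((hF.subset Set.sdiff_subset).isClosed_convexHull ℝ) (x := 0) fun h => (hsub h).2 rfl
  refine ⟨fun j => f fun i => if j = i then 1 else 0, fun x hx =>
    or_iff_not_imp_left.mpr fun hx0 => ?_⟩
  have h := hf x (subset_convexHull ℝ _ ⟨hx, hx0⟩)
  rw [map_zero] at hu
  have hfx : f x = x ⬝ᵥ fun j => f fun i => if j = i then 1 else 0 :=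
    LinearMap.pi_apply_eq_sum_univ (f : (Fin k → ℝ) →ₗ[ℝ] ℝ) x
  linarith

/-! ### Exponentials -/

section Exponentials

variable {k : ℕ}

theorem apExp_apply (lam x : Fin k → ℝ) :
    apExp k lam x = Complex.exp (Complex.I * ((lam ⬝ᵥ x : ℝ) : ℂ)) := rfl

theorem apExp_zero : apExp k 0 = 1 := by
  ext x
  simp [apExp_apply]

theorem apExp_add (lam μ : Fin k → ℝ) : apExp k (lam + μ) = apExp k lam * apExp k μ := by
  ext x
  simp [apExp_apply, add_dotProduct, mul_add, Complex.exp_add]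

theorem norm_apExp_apply (lam x : Fin k → ℝ) : ‖apExp k lam x‖ = 1 := by
  rw [apExp_apply, mul_comm, Complex.norm_exp_ofReal_mul_I]

theorem norm_apExp_le (lam : Fin k → ℝ) : ‖apExp k lam‖ ≤ 1 :=
  (BoundedContinuousFunction.norm_le zero_le_one).mpr fun x => (norm_apExp_apply lam x).le

/-- The algebra generated by the exponentials with frequencies in a submonoid is their span. -/
theorem adjoin_apExp_toSubmodule (Λ : AddSubmonoid (Fin k → ℝ)) :
    Subalgebra.toSubmodule (Algebra.adjoin ℂ (apExp k '' Λ)) =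
      Submodule.span ℂ (apExp k '' Λ) := by
  refine Algebra.adjoin_eq_span_of_subset _ fun f hf => Submodule.subset_span ?_
  induction hf using Submonoid.closure_induction with
  | mem f hf => exact hf
  | one => exact ⟨0, Λ.zero_mem, apExp_zero⟩
  | mul f g _ _ hf hg =>
    obtain ⟨lam, hlam, rfl⟩ := hf
    obtain ⟨μ, hμ, rfl⟩ := hg
    exact ⟨lam + μ, Λ.add_mem hlam hμ, apExp_add lam μ⟩

theorem apExp_mem_APalg (lam : Fin k → ℝ) : apExp k lam ∈ APalg k :=
  Subalgebra.le_topologicalClosure _ (Algebra.subset_adjoin ⟨lam, rfl⟩)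

theorem exists_span_norm_sub_lt {Λ : AddSubmonoid (Fin k → ℝ)} {f : APB k}
    (hf : f ∈ (Algebra.adjoin ℂ (apExp k '' Λ)).topologicalClosure) {ε : ℝ} (hε : 0 < ε) :
    ∃ p ∈ Submodule.span ℂ (apExp k '' Λ), ‖f - p‖ < ε := by
  obtain ⟨p, hp, hfp⟩ := Metric.mem_closure_iff.mp hf ε hε
  refine ⟨p, ?_, by rwa [← dist_eq_norm]⟩
  rw [← adjoin_apExp_toSubmodule]
  exact hp

theorem exists_trigPoly_norm_sub_lt {f : APB k} (hf : f ∈ APalg k) {ε : ℝ} (hε : 0 < ε) :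
    ∃ p ∈ Submodule.span ℂ (Set.range (apExp k)), ‖f - p‖ < ε := by
  simpa using exists_span_norm_sub_lt (Λ := ⊤) (by simpa [APalg] using hf) hε

end Exponentials

/-! ### Means over boxes -/

/-- The average of `f` over the box `[-T, T]^k`. -/
def boxMean (k : ℕ) (f : APB k) (T : ℝ) : ℂ :=
  (((2 * T) ^ k : ℝ) : ℂ)⁻¹ * ∫ x in Set.Icc (fun _ => -T : Fin k → ℝ) (fun _ => T), f x

section BoxMean

variable {k : ℕ}

theorem APB.integrableOn_Icc (f : APB k) (a b : Fin k → ℝ) : IntegrableOn f (Set.Icc a b) :=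
  f.continuous.integrableOn_Icc

theorem boxMean_add (f g : APB k) (T : ℝ) :
    boxMean k (f + g) T = boxMean k f T + boxMean k g T := by
  simp only [boxMean, BoundedContinuousFunction.add_apply]
  rw [integral_add (f.integrableOn_Icc _ _) (g.integrableOn_Icc _ _), mul_add]

theorem boxMean_smul (c : ℂ) (f : APB k) (T : ℝ) :
    boxMean k (c • f) T = c * boxMean k f T := by
  simp only [boxMean, BoundedContinuousFunction.smul_apply, smul_eq_mul]
  rw [integral_const_mul, mul_left_comm]

theorem boxMean_sum {ι : Type*} (s : Finset ι) (f : ι → APB k) (T : ℝ) :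
    boxMean k (∑ i ∈ s, f i) T = ∑ i ∈ s, boxMean k (f i) T := by
  simp only [boxMean, BoundedContinuousFunction.sum_apply]
  rw [integral_finsetSum _ fun i _ => (f i).integrableOn_Icc _ _, Finset.mul_sum]

theorem boxMean_one {T : ℝ} (hT : 0 < T) : boxMean k 1 T = 1 := by
  have h : volume.real (Set.Icc (fun _ => -T : Fin k → ℝ) (fun _ => T)) = (2 * T) ^ k := by
    rw [Measure.real, Real.volume_Icc_pi_toReal fun _ => by linarith]
    simp [two_mul]
  simp only [boxMean, BoundedContinuousFunction.coe_one, Pi.one_apply, integral_const,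
    measureReal_restrict_apply_univ, h]
  have : (((2 * T) ^ k : ℝ) : ℂ) ≠ 0 := by
    rw [Complex.ofReal_ne_zero]; positivity
  simp only [Complex.real_smul, mul_one, inv_mul_cancel₀ this]

theorem norm_boxMean_mul_le (f : APB k) {g : APB k} {r : (Fin k → ℝ) → ℝ} (hr : ∀ x, 0 ≤ r x)
    (hg : ∀ x, g x = r x) (T : ℝ) :
    ‖boxMean k (f * g) T‖ ≤ ‖f‖ * ‖boxMean k g T‖ := by
  have hr' : ∀ x, r x = ‖g x‖ := fun x => by
    rw [hg, Complex.norm_real, Real.norm_of_nonneg (hr x)]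
  have hint : ∫ x in Set.Icc (fun _ => -T : Fin k → ℝ) (fun _ => T), g x =
      ((∫ x in Set.Icc (fun _ => -T : Fin k → ℝ) (fun _ => T), r x : ℝ) : ℂ) := by
    rw [← integral_complex_ofReal]
    exact integral_congr_ae (.of_forall hg)
  have hle : ‖∫ x in Set.Icc (fun _ => -T : Fin k → ℝ) (fun _ => T), (f * g) x‖ ≤
      ‖f‖ * ∫ x in Set.Icc (fun _ => -T : Fin k → ℝ) (fun _ => T), r x := by
    rw [← integral_const_mul]
    refine norm_integral_le_of_norm_le (.const_mul ?_ _) (.of_forall fun x => ?_)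
    · rw [funext hr']
      exact (g.integrableOn_Icc _ _).norm
    · rw [BoundedContinuousFunction.mul_apply, norm_mul, hr']
      gcongr
      exact f.norm_coe_le_norm x
  have hnn : 0 ≤ ∫ x in Set.Icc (fun _ => -T : Fin k → ℝ) (fun _ => T), r x :=
    integral_nonneg hr
  rw [boxMean, boxMean, norm_mul, norm_mul, hint, Complex.norm_real, Real.norm_of_nonneg hnn,
    mul_left_comm]
  gcongr

theorem norm_boxMean_le (f : APB k) {T : ℝ} (hT : 0 < T) : ‖boxMean k f T‖ ≤ ‖f‖ := by
  simpa [boxMean_one hT] using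
    norm_boxMean_mul_le f (g := 1) (r := 1) (fun _ => zero_le_one) (fun _ => by simp) T

theorem norm_integral_exp_le {c : ℝ} (hc : c ≠ 0) (T : ℝ) :
    ‖∫ x in Set.Icc (-T) T, Complex.exp (Complex.I * ((c * x : ℝ) : ℂ))‖ ≤ 2 / |c| := by
  rcases le_or_gt (-T) T with hT | hT
  · rw [integral_Icc_eq_integral_Ioc, ← intervalIntegral.integral_of_le hT]
    have hc' : Complex.I * c ≠ 0 := by simp [hc]
    have h : ∀ x : ℝ, Complex.exp (Complex.I * ((c * x : ℝ) : ℂ)) =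
        Complex.exp ((Complex.I * c) * x) := fun x => by push_cast; ring_nf
    have hnorm : ∀ x : ℝ, ‖Complex.exp ((Complex.I * c) * x)‖ = 1 := fun x => by
      rw [← h, mul_comm, Complex.norm_exp_ofReal_mul_I]
    simp only [h]
    rw [integral_exp_mul_complex hc', norm_div, norm_mul, Complex.norm_I, one_mul,
      Complex.norm_real, Real.norm_eq_abs]
    gcongr
    refine (norm_sub_le _ _).trans ?_
    rw [hnorm, hnorm]
    norm_num
  · rw [Set.Icc_eq_empty hT.not_ge]
    simp
    positivity

theorem boxMean_apExp (lam : Fin k → ℝ) (T : ℝ) :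
    boxMean k (apExp k lam) T = ∏ j, ((2 * T : ℝ) : ℂ)⁻¹ *
      ∫ x in Set.Icc (-T) T, Complex.exp (Complex.I * ((lam j * x : ℝ) : ℂ)) := by
  have h : ∀ x, apExp k lam x =
      ∏ j, Complex.exp (Complex.I * ((lam j * x j : ℝ) : ℂ)) := fun x => by
    rw [apExp_apply, ← Complex.exp_sum, ← Finset.mul_sum, dotProduct, Complex.ofReal_sum]
  rw [boxMean, ← Set.pi_univ_Icc, volume_pi, Measure.restrict_pi_pi, Finset.prod_mul_distrib,
    ← integral_fintype_prod_eq_prod]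
  simp only [h, Finset.prod_const, Finset.card_univ, Fintype.card_fin, Complex.ofReal_pow, inv_pow]

theorem norm_boxMean_apExp_le {lam : Fin k → ℝ} {j : Fin k} (hj : lam j ≠ 0) {T : ℝ}
    (hT : 0 < T) : ‖boxMean k (apExp k lam) T‖ ≤ (2 * T)⁻¹ * (2 / |lam j|) := by
  have hT2 : ‖((2 * T : ℝ) : ℂ)⁻¹‖ = (2 * T)⁻¹ := by
    rw [norm_inv, Complex.norm_real, Real.norm_of_nonneg (by positivity)]
  rw [boxMean_apExp, ← Finset.mul_prod_erase _ _ (Finset.mem_univ j), norm_mul, norm_mul, hT2,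
    norm_prod]
  refine (mul_le_of_le_one_right (by positivity) (Finset.prod_le_one (fun _ _ => norm_nonneg _)
    fun i _ => ?_)).trans ?_
  · rw [norm_mul, hT2, inv_mul_le_one₀ (by positivity)]
    refine (norm_setIntegral_le_of_norm_le_const (C := 1) (by simp) fun x _ => ?_).trans ?_
    · rw [mul_comm, Complex.norm_exp_ofReal_mul_I]
    · rw [Real.volume_real_Icc_of_le (by linarith)]
      linarith
  · gcongr
    exact norm_integral_exp_le hj T

theorem tendsto_boxMean_apExp (lam : Fin k → ℝ) :
    Tendsto (boxMean k (apExp k lam)) atTop (nhds (if lam = 0 then 1 else 0)) := by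
  split_ifs with h
  · rw [h, apExp_zero]
    refine tendsto_const_nhds.congr' ?_
    filter_upwards [eventually_gt_atTop 0] with T hT
    rw [boxMean_one hT]
  · obtain ⟨j, hj⟩ := Function.ne_iff.mp h
    have hlim : Tendsto (fun T : ℝ => (2 * T)⁻¹ * (2 / |lam j|)) atTop (nhds 0) := by
      simpa using (tendsto_inv_atTop_zero.comp
        (tendsto_id.const_mul_atTop (zero_lt_two' ℝ))).mul_const (2 / |lam j|)
    refine squeeze_zero_norm' ?_ hlim
    filter_upwards [eventually_gt_atTop 0] with T hT
    exact norm_boxMean_apExp_le hj hT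

/-- Every almost periodic function has a mean value. -/
theorem exists_tendsto_boxMean {f : APB k} (hf : f ∈ APalg k) :
    ∃ c, Tendsto (boxMean k f) atTop (nhds c) := by
  have hspan : ∀ p ∈ Submodule.span ℂ (Set.range (apExp k)),
      ∃ c, Tendsto (boxMean k p) atTop (nhds c) := by
    intro p hp
    induction hp using Submodule.span_induction with
    | mem p hp =>
      obtain ⟨lam, rfl⟩ := hp
      exact ⟨_, tendsto_boxMean_apExp lam⟩
    | zero => exact ⟨0, tendsto_const_nhds.congr fun T => by simp [boxMean]⟩
    | add p q _ _ hp hq =>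
      obtain ⟨c, hc⟩ := hp
      obtain ⟨d, hd⟩ := hq
      exact ⟨c + d, (hc.add hd).congr fun T => (boxMean_add p q T).symm⟩
    | smul z p _ hp =>
      obtain ⟨c, hc⟩ := hp
      exact ⟨z * c, (hc.const_mul z).congr fun T => (boxMean_smul z p T).symm⟩
  refine cauchySeq_tendsto_of_complete (Metric.cauchySeq_iff.mpr fun ε hε => ?_)
  obtain ⟨p, hp, hfp⟩ := exists_trigPoly_norm_sub_lt hf (show 0 < ε / 4 by positivity)
  obtain ⟨c, hc⟩ := hspan p hp
  obtain ⟨N, hN⟩ := Metric.cauchySeq_iff.mp hc.cauchySeq (ε / 4) (by positivity)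
  have hclose : ∀ T, 0 < T → dist (boxMean k f T) (boxMean k p T) < ε / 4 := by
    intro T hT
    have h : boxMean k f T = boxMean k (f - p) T + boxMean k p T := by
      rw [← boxMean_add, sub_add_cancel]
    rw [dist_eq_norm, h, add_sub_cancel_right]
    exact (norm_boxMean_le _ hT).trans_lt hfp
  refine ⟨max N 1, fun T hT T' hT' => ?_⟩
  have h1 := hclose T (zero_lt_one.trans_le ((le_max_right _ _).trans hT))
  have h2 := hclose T' (zero_lt_one.trans_le ((le_max_right _ _).trans hT'))
  have h3 := hN T ((le_max_left _ _).trans hT) T' ((le_max_left _ _).trans hT')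
  rw [dist_comm] at h2
  have := dist_triangle4 (boxMean k f T) (boxMean k p T) (boxMean k p T') (boxMean k f T')
  linarith

end BoxMean

/-! ### Bohr-Fourier coefficients of almost periodic functions -/

section BohrCoeff

variable {k : ℕ}

theorem tendsto_bohrCoeff {f : APB k} (hf : f ∈ APalg k) (lam : Fin k → ℝ) :
    Tendsto (boxMean k (apExp k (-lam) * f)) atTop (nhds (bohrCoeff k f lam)) := by
  obtain ⟨c, hc⟩ := exists_tendsto_boxMean ((APalg k).mul_mem (apExp_mem_APalg (-lam)) hf)
  have h : bohrCoeff k f lam = limUnder atTop (boxMean k (apExp k (-lam) * f)) := by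
    unfold bohrCoeff boxMean
    simp only [BoundedContinuousFunction.mul_apply, apExp_apply, neg_dotProduct,
      Complex.ofReal_neg, mul_neg]
    rfl
  rwa [h, hc.limUnder_eq]

theorem bohrCoeff_add {f g : APB k} (hf : f ∈ APalg k) (hg : g ∈ APalg k) (lam : Fin k → ℝ) :
    bohrCoeff k ⇑(f + g) lam = bohrCoeff k f lam + bohrCoeff k g lam :=
  tendsto_nhds_unique (tendsto_bohrCoeff ((APalg k).add_mem hf hg) lam) <|
    ((tendsto_bohrCoeff hf lam).add (tendsto_bohrCoeff hg lam)).congr fun T => by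
      rw [mul_add, boxMean_add]

theorem bohrCoeff_smul {f : APB k} (hf : f ∈ APalg k) (c : ℂ) (lam : Fin k → ℝ) :
    bohrCoeff k ⇑(c • f) lam = c * bohrCoeff k f lam :=
  tendsto_nhds_unique (tendsto_bohrCoeff ((APalg k).smul_mem hf c) lam) <|
    ((tendsto_bohrCoeff hf lam).const_mul c).congr fun T => by
      rw [mul_smul_comm, boxMean_smul]

theorem bohrCoeff_apExp (μ lam : Fin k → ℝ) :
    bohrCoeff k (apExp k μ) lam = if μ = lam then 1 else 0 := by
  refine tendsto_nhds_unique (tendsto_bohrCoeff (apExp_mem_APalg μ) lam) ?_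
  have h := tendsto_boxMean_apExp (-lam + μ)
  simpa only [← apExp_add, neg_add_eq_zero, eq_comm] using h

theorem norm_bohrCoeff_le {f : APB k} (hf : f ∈ APalg k) (lam : Fin k → ℝ) :
    ‖bohrCoeff k f lam‖ ≤ ‖f‖ := by
  refine le_of_tendsto (tendsto_bohrCoeff hf lam).norm ?_
  filter_upwards [eventually_gt_atTop 0] with T hT
  calc ‖boxMean k (apExp k (-lam) * f) T‖ ≤ ‖apExp k (-lam) * f‖ := norm_boxMean_le _ hT
    _ ≤ ‖apExp k (-lam)‖ * ‖f‖ := norm_mul_le _ _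
    _ ≤ 1 * ‖f‖ := by gcongr; exact norm_apExp_le _
    _ = ‖f‖ := one_mul _

/-! ### Fejér means -/

open Finset in
/-- The Fejér mean of `f` associated with a finite set `B` of frequencies. -/
def fejerMean (B : Finset (Fin k → ℝ)) (f : APB k) : APB k :=
  (#B : ℂ)⁻¹ • ∑ α ∈ B, ∑ β ∈ B, bohrCoeff k f (α - β) • apExp k (α - β)

theorem fejerMean_add (B : Finset (Fin k → ℝ)) {f g : APB k} (hf : f ∈ APalg k)
    (hg : g ∈ APalg k) : fejerMean B (f + g) = fejerMean B f + fejerMean B g := by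
  simp only [fejerMean, bohrCoeff_add hf hg, add_smul, Finset.sum_add_distrib, smul_add]

theorem fejerMean_smul (B : Finset (Fin k → ℝ)) {f : APB k} (hf : f ∈ APalg k) (c : ℂ) :
    fejerMean B (c • f) = c • fejerMean B f := by
  simp only [fejerMean, bohrCoeff_smul hf, mul_smul, ← Finset.smul_sum]
  rw [smul_comm]

open Finset in
theorem fejerMean_apExp (B : Finset (Fin k → ℝ)) (μ : Fin k → ℝ) :
    fejerMean B (apExp k μ) =
      ((#B : ℂ)⁻¹ * #{β ∈ B | μ + β ∈ B}) • apExp k μ := by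
  rw [fejerMean, mul_smul, sum_comm]
  congr 1
  have h : ∀ β ∈ B, ∑ α ∈ B, bohrCoeff k (apExp k μ) (α - β) • apExp k (α - β) =
      if μ + β ∈ B then apExp k μ else 0 := by
    intro β _
    rw [← sum_ite_eq B (μ + β) fun _ => apExp k μ]
    refine sum_congr rfl fun α _ => ?_
    rw [bohrCoeff_apExp]
    by_cases hα : μ = α - β
    · rw [if_pos hα, if_pos (eq_sub_iff_add_eq.mp hα), one_smul, ← hα]
    · rw [if_neg hα, if_neg fun h => hα (eq_sub_iff_add_eq.mpr h), zero_smul]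
  rw [sum_congr rfl h, ← sum_filter, sum_const, Nat.cast_smul_eq_nsmul]

open Finset in
theorem norm_fejerMean_le {B : Finset (Fin k → ℝ)} (hB : B.Nonempty) {f : APB k}
    (hf : f ∈ APalg k) : ‖fejerMean B f‖ ≤ ‖f‖ := by
  refine (BoundedContinuousFunction.norm_le (norm_nonneg f)).mpr fun x => ?_
  let g : APB k := ∑ α ∈ B, ∑ β ∈ B, apExp k (α - β) x • apExp k (-(α - β))
  have hBpos : (0 : ℝ) < #B := mod_cast hB.card_pos
  have hg : ∀ y, g y = ((‖∑ α ∈ B, apExp k α (x - y)‖ ^ 2 : ℝ) : ℂ) := by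
    intro y
    rw [← Complex.normSq_eq_norm_sq, ← Complex.mul_conj, map_sum, sum_mul_sum]
    simp only [g, BoundedContinuousFunction.sum_apply, BoundedContinuousFunction.smul_apply,
      smul_eq_mul, apExp_apply, ← Complex.exp_conj, ← Complex.exp_add]
    refine sum_congr rfl fun α _ => sum_congr rfl fun β _ => ?_
    congr 1
    simp only [sub_dotProduct, neg_dotProduct, dotProduct_sub, map_mul, Complex.conj_I,
      Complex.conj_ofReal]
    push_cast
    ring
  have hmean : Tendsto (boxMean k g) atTop (nhds (#B : ℂ)) := by
    have h : Tendsto (fun T => ∑ α ∈ B, ∑ β ∈ B,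
        apExp k (α - β) x * boxMean k (apExp k (-(α - β))) T) atTop
        (nhds (∑ α ∈ B, ∑ β ∈ B, apExp k (α - β) x * if -(α - β) = 0 then 1 else 0)) :=
      tendsto_finsetSum _ fun α _ => tendsto_finsetSum _ fun β _ =>
        (tendsto_boxMean_apExp _).const_mul _
    convert h using 2
    · simp only [g, boxMean_sum, boxMean_smul]
    · simp +contextual [neg_eq_zero, sub_eq_zero, apExp_zero, -neg_sub]
  have hfmean : Tendsto (boxMean k (f * g)) atTop (nhds (∑ α ∈ B, ∑ β ∈ B,
      apExp k (α - β) x * bohrCoeff k f (α - β))) := by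
    have h : Tendsto (fun T => ∑ α ∈ B, ∑ β ∈ B,
        apExp k (α - β) x * boxMean k (apExp k (-(α - β)) * f) T) atTop
        (nhds (∑ α ∈ B, ∑ β ∈ B, apExp k (α - β) x * bohrCoeff k f (α - β))) :=
      tendsto_finsetSum _ fun α _ => tendsto_finsetSum _ fun β _ =>
        (tendsto_bohrCoeff hf _).const_mul _
    refine h.congr fun T => ?_
    simp only [g, mul_comm f, Finset.sum_mul, smul_mul_assoc, boxMean_sum, boxMean_smul]
  have hle := le_of_tendsto_of_tendsto' hfmean.norm (hmean.norm.const_mul ‖f‖) fun T =>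
    norm_boxMean_mul_le f (fun y => by positivity) hg T
  rw [Complex.norm_natCast] at hle
  have hval : fejerMean B f x = (#B : ℂ)⁻¹ * ∑ α ∈ B, ∑ β ∈ B,
      apExp k (α - β) x * bohrCoeff k f (α - β) := by
    simp [fejerMean, BoundedContinuousFunction.sum_apply, mul_comm]
  rw [hval, norm_mul, norm_inv, Complex.norm_natCast, inv_mul_le_iff₀ hBpos, mul_comm]
  exact hle

/-- Fejér means approximate almost periodic functions uniformly. -/
theorem exists_norm_fejerMean_sub_lt {f : APB k} (hf : f ∈ APalg k) {ε : ℝ} (hε : 0 < ε) :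
    ∃ B : Finset (Fin k → ℝ), ‖fejerMean B f - f‖ < ε := by
  classical
  obtain ⟨p, hp, hfp⟩ := exists_trigPoly_norm_sub_lt hf (show 0 < ε / 3 by positivity)
  obtain ⟨c, rfl⟩ := (Finsupp.mem_span_range_iff_exists_finsupp).mp hp
  have hpmem : ∀ s : Finset (Fin k → ℝ), ∑ μ ∈ s, c μ • apExp k μ ∈ APalg k := fun s =>
    (APalg k).sum_mem fun μ _ => (APalg k).smul_mem (apExp_mem_APalg μ) _
  set C := ∑ μ ∈ c.support, ‖c μ‖
  have hC : 0 ≤ C := Finset.sum_nonneg fun _ _ => norm_nonneg _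
  obtain ⟨B, hB, hinv⟩ := exists_finset_almost_invariant c.support
    (show 0 < ε / (3 * (C + 1)) by positivity)
  have hBpos : (0 : ℝ) < B.card := mod_cast hB.card_pos
  have hexp : ∀ μ ∈ c.support,
      ‖fejerMean B (apExp k μ) - apExp k μ‖ ≤ ε / (3 * (C + 1)) := by
    intro μ hμ
    rw [fejerMean_apExp, sub_eq_add_neg, ← neg_one_smul ℂ (apExp k μ),
      ← add_smul, ← sub_eq_add_neg, norm_smul]
    refine (mul_le_of_le_one_right (norm_nonneg _) (norm_apExp_le μ)).trans ?_
    have hcard : ((B.filter fun β => μ + β ∈ B).card : ℝ) ≤ B.card :=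
      mod_cast Finset.card_filter_le _ _
    have hcast : ((B.card : ℂ)⁻¹ * (B.filter fun β => μ + β ∈ B).card - 1) =
        (((B.card : ℝ)⁻¹ * (B.filter fun β => μ + β ∈ B).card - 1 : ℝ) : ℂ) := by
      push_cast; rfl
    have h1 : (B.card : ℝ)⁻¹ * (B.filter fun β => μ + β ∈ B).card ≤ 1 :=
      (inv_mul_le_one₀ hBpos).mpr hcard
    have h2 : 1 - ε / (3 * (C + 1)) ≤ (B.card : ℝ)⁻¹ * (B.filter fun β => μ + β ∈ B).card := by
      rw [le_inv_mul_iff₀ hBpos, mul_comm]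
      exact hinv μ hμ
    rw [hcast, Complex.norm_real, Real.norm_eq_abs, abs_le]
    constructor <;> linarith
  have hpoly : ∀ s : Finset (Fin k → ℝ), s ⊆ c.support →
      ‖fejerMean B (∑ μ ∈ s, c μ • apExp k μ) - ∑ μ ∈ s, c μ • apExp k μ‖ ≤
        (∑ μ ∈ s, ‖c μ‖) * (ε / (3 * (C + 1))) := by
    intro s
    induction s using Finset.induction_on with
    | empty =>
      intro _
      have : fejerMean B (0 : APB k) = 0 := by
        simpa using fejerMean_smul B (APalg k).zero_mem 0
      simp [this]
    | insert μ s hμ ih =>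
      intro hs
      rw [Finset.sum_insert hμ, Finset.sum_insert hμ,
        fejerMean_add B ((APalg k).smul_mem (apExp_mem_APalg μ) _) (hpmem s),
        fejerMean_smul B (apExp_mem_APalg μ), add_sub_add_comm, ← smul_sub, add_mul]
      refine (norm_add_le _ _).trans (add_le_add ?_ (ih ((Finset.subset_insert _ _).trans hs)))
      rw [norm_smul]
      gcongr
      exact hexp μ (hs (Finset.mem_insert_self _ _))
  refine ⟨B, ?_⟩
  have hpsum : (c.sum fun μ z => z • apExp k μ) = ∑ μ ∈ c.support, c μ • apExp k μ := rfl
  rw [hpsum] at hfp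
  set p := ∑ μ ∈ c.support, c μ • apExp k μ
  have hdiff : f - p ∈ APalg k := (APalg k).sub_mem hf (hpmem _)
  have hsplit : fejerMean B f - f = fejerMean B (f - p) + (fejerMean B p - p) - (f - p) := by
    have h := fejerMean_add B hdiff (hpmem c.support)
    rw [sub_add_cancel] at h
    rw [h]
    abel
  have h1 := (norm_fejerMean_le hB hdiff).trans_lt hfp
  have h2 : ‖fejerMean B p - p‖ < ε / 3 := by
    refine (hpoly _ subset_rfl).trans_lt ?_
    rw [← mul_div_assoc, div_lt_div_iff₀ (by positivity) (by positivity)]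
    nlinarith
  rw [hsplit]
  have h3 := norm_sub_le (fejerMean B (f - p) + (fejerMean B p - p)) (f - p)
  have h4 := norm_add_le (fejerMean B (f - p)) (fejerMean B p - p)
  linarith

/-- Functions with spectrum in a submonoid `Λ` are the uniform limits of
trigonometric polynomials with frequencies in `Λ`. -/
theorem APmem_iff_mem_topologicalClosure (Λ : AddSubmonoid (Fin k → ℝ)) (f : APB k) :
    APmem k Λ f ↔ f ∈ (Algebra.adjoin ℂ (apExp k '' Λ)).topologicalClosure := by
  constructor
  · rintro ⟨hf, hspec⟩
    refine Metric.mem_closure_iff.mpr fun ε hε => ?_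
    obtain ⟨B, hB⟩ := exists_norm_fejerMean_sub_lt hf hε
    refine ⟨fejerMean B f, ?_, by rwa [dist_comm, dist_eq_norm]⟩
    refine Subalgebra.smul_mem _ (sum_mem fun α _ => sum_mem fun β _ => ?_) _
    by_cases h : bohrCoeff k f (α - β) = 0
    · rw [h, zero_smul]
      exact zero_mem _
    · exact Subalgebra.smul_mem _ (Algebra.subset_adjoin (Set.mem_image_of_mem _ (hspec h))) _
  · intro hf
    have hle : (Algebra.adjoin ℂ (apExp k '' Λ)).topologicalClosure ≤ APalg k :=
      Subalgebra.topologicalClosure_mono (Algebra.adjoin_mono (Set.image_subset_range _ _))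
    have hspan : ∀ p ∈ Submodule.span ℂ (apExp k '' Λ), p ∈ APalg k ∧
        ∀ lam ∉ Λ, bohrCoeff k p lam = 0 := by
      intro p hp
      induction hp using Submodule.span_induction with
      | mem p hp =>
        obtain ⟨μ, hμ, rfl⟩ := hp
        refine ⟨apExp_mem_APalg μ, fun lam hlam => ?_⟩
        rw [bohrCoeff_apExp, if_neg]
        rintro rfl
        exact hlam hμ
      | zero =>
        refine ⟨zero_mem _, fun lam _ => ?_⟩
        simpa using bohrCoeff_smul (APalg k).zero_mem 0 lam
      | add p q _ _ hp hq =>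
        refine ⟨add_mem hp.1 hq.1, fun lam hlam => ?_⟩
        rw [bohrCoeff_add hp.1 hq.1, hp.2 lam hlam, hq.2 lam hlam, add_zero]
      | smul c p _ hp =>
        refine ⟨(APalg k).smul_mem hp.1 c, fun lam hlam => ?_⟩
        rw [bohrCoeff_smul hp.1, hp.2 lam hlam, mul_zero]
    refine ⟨hle hf, fun lam hlam => by_contra fun hnot => ?_⟩
    obtain ⟨p, hp, hfp⟩ := exists_span_norm_sub_lt hf (norm_pos_iff.mpr hlam)
    obtain ⟨hpmem, hpcoeff⟩ := hspan p hp
    have hsub := (APalg k).sub_mem (hle hf) hpmem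
    have h := bohrCoeff_add hsub hpmem lam
    rw [sub_add_cancel, hpcoeff lam hnot, add_zero] at h
    have := norm_bohrCoeff_le hsub lam
    rw [← h] at this
    linarith

end BohrCoeff

/-! ### Contracting trigonometric polynomials to constants -/

section Dilation

variable {k : ℕ} {Λ : AddSubmonoid (Fin k → ℝ)} {v : Fin k → ℝ}

/-- The algebra homomorphism sending the formal exponential with frequency `λ` to
`t ^ ⟨λ, v⟩ • e_λ`. -/
def dilation (hv : ∀ lam ∈ Λ, 0 ≤ lam ⬝ᵥ v) (t : unitInterval) :
    AddMonoidAlgebra ℂ Λ →ₐ[ℂ] APB k :=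
  AddMonoidAlgebra.lift ℂ (APB k) Λ
    { toFun := fun lam => (((t : ℝ) ^ (lam.toAdd.1 ⬝ᵥ v) : ℝ) : ℂ) • apExp k lam.toAdd.1
      map_one' := by simp [apExp_zero]
      map_mul' := fun lam μ => by
        simp only [toAdd_mul, AddSubmonoid.coe_add, add_dotProduct, apExp_add]
        rw [Real.rpow_add_of_nonneg t.2.1 (hv _ lam.toAdd.2) (hv _ μ.toAdd.2), Complex.ofReal_mul,
          smul_mul_smul_comm] }

theorem dilation_apply (hv : ∀ lam ∈ Λ, 0 ≤ lam ⬝ᵥ v) (t : unitInterval)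
    (P : AddMonoidAlgebra ℂ Λ) :
    dilation hv t P = ∑ lam ∈ P.coeff.support,
      P.coeff lam • (((t : ℝ) ^ (lam.1 ⬝ᵥ v) : ℝ) : ℂ) • apExp k lam.1 := by
  simp [dilation, AddMonoidAlgebra.lift_apply, Finsupp.sum]

theorem dilation_mem_span (hv : ∀ lam ∈ Λ, 0 ≤ lam ⬝ᵥ v) (t : unitInterval)
    (P : AddMonoidAlgebra ℂ Λ) : dilation hv t P ∈ Submodule.span ℂ (apExp k '' Λ) := by
  rw [dilation_apply]
  exact sum_mem fun lam _ => Submodule.smul_mem _ _ <| Submodule.smul_mem _ _ <|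
    Submodule.subset_span <| Set.mem_image_of_mem _ lam.2

theorem continuous_dilation (hv : ∀ lam ∈ Λ, 0 ≤ lam ⬝ᵥ v) (P : AddMonoidAlgebra ℂ Λ) :
    Continuous fun t => dilation hv t P := by
  simp only [dilation_apply]
  refine continuous_finsetSum _ fun lam _ => ?_
  have h : Continuous fun t : unitInterval => (t : ℝ) ^ (lam.1 ⬝ᵥ v) :=
    (Real.continuous_rpow_const (hv _ lam.2)).comp continuous_subtype_val
  fun_prop

theorem exists_dilation_one_eq (hv : ∀ lam ∈ Λ, 0 ≤ lam ⬝ᵥ v) {p : APB k}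
    (hp : p ∈ Submodule.span ℂ (apExp k '' Λ)) : ∃ P, dilation hv 1 P = p := by
  have hle : Submodule.span ℂ (apExp k '' Λ) ≤ LinearMap.range (dilation hv 1).toLinearMap := by
    rw [Submodule.span_le]
    rintro _ ⟨lam, hlam, rfl⟩
    exact ⟨AddMonoidAlgebra.single ⟨lam, hlam⟩ 1, by simp [dilation]⟩
  exact hle hp

theorem exists_dilation_zero_eq (hv : ∀ lam ∈ Λ, 0 ≤ lam ⬝ᵥ v)
    (hv' : ∀ lam ∈ Λ, lam ⬝ᵥ v = 0 → lam = 0) (P : AddMonoidAlgebra ℂ Λ) :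
    ∃ c : ℂ, dilation hv 0 P = algebraMap ℂ (APB k) c := by
  have h : dilation hv 0 P ∈ (⊥ : Subalgebra ℂ (APB k)) := by
    rw [dilation_apply]
    refine sum_mem fun lam _ => Subalgebra.smul_mem _ ?_ _
    by_cases h : lam.1 ⬝ᵥ v = 0
    · rw [hv' _ lam.2 h, apExp_zero]
      exact Subalgebra.smul_mem _ (one_mem _) _
    · simp only [Set.Icc.coe_zero, Real.zero_rpow h, Complex.ofReal_zero, zero_smul, zero_mem]
  obtain ⟨c, hc⟩ := Algebra.mem_bot.mp h
  exact ⟨c, hc.symm⟩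

/-- The maximum principle for sums of decaying exponentials in the right half-plane. -/
theorem norm_sum_exp_le {ι : Type*} (s : Finset ι) (c : ι → ℂ) {r : ι → ℝ} (hr : ∀ i, 0 ≤ r i)
    {C : ℝ} (hC : ∀ y : ℝ, ‖∑ i ∈ s, c i * Complex.exp (-(r i * (y * Complex.I)))‖ ≤ C)
    {x : ℝ} (hx : 0 ≤ x) : ‖∑ i ∈ s, c i * Complex.exp (-(r i * x))‖ ≤ C := by
  let f : ℂ → ℂ := fun z => ∑ i ∈ s, c i * Complex.exp (-(r i * z))
  have hbound : ∀ z : ℂ, 0 ≤ z.re → ‖f z‖ ≤ ∑ i ∈ s, ‖c i‖ := by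
    intro z hz
    refine norm_sum_le_of_le _ fun i _ => ?_
    rw [norm_mul, Complex.norm_exp]
    refine mul_le_of_le_one_right (norm_nonneg _) (Real.exp_le_one_iff.mpr ?_)
    simpa using mul_nonneg (hr i) hz
  have hdiff : Differentiable ℂ f := by
    unfold f
    fun_prop
  refine PhragmenLindelof.right_half_plane_of_bounded_on_real (f := f) (z := x)
    hdiff.diffContOnCl ⟨0, by norm_num, 0, ?_⟩ ?_ hC (by simpa using hx)
  · refine Asymptotics.IsBigO.of_bound (∑ i ∈ s, ‖c i‖) ?_
    filter_upwards [mem_inf_of_right (mem_principal_self {z : ℂ | 0 < z.re})] with z hz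
    simpa using hbound z (le_of_lt hz)
  · refine ⟨∑ i ∈ s, ‖c i‖, eventually_map.mpr ?_⟩
    filter_upwards [eventually_ge_atTop 0] with y hy
    exact hbound y (by simpa using hy)

theorem norm_dilation_le (hv : ∀ lam ∈ Λ, 0 ≤ lam ⬝ᵥ v) (t : unitInterval)
    (P : AddMonoidAlgebra ℂ Λ) : ‖dilation hv t P‖ ≤ ‖dilation hv 1 P‖ := by
  have hpos : ∀ t : unitInterval, 0 < t → ‖dilation hv t P‖ ≤ ‖dilation hv 1 P‖ := by
    intro t ht
    refine (BoundedContinuousFunction.norm_le (norm_nonneg _)).mpr fun x => ?_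
    have ht' : (0 : ℝ) < t := ht
    have hval : dilation hv t P x = ∑ lam ∈ P.coeff.support, (P.coeff lam * apExp k lam.1 x) *
        Complex.exp (-(((lam.1 ⬝ᵥ v : ℝ) : ℂ) * ((-Real.log t : ℝ) : ℂ))) := by
      rw [dilation_apply, BoundedContinuousFunction.sum_apply]
      refine Finset.sum_congr rfl fun lam _ => ?_
      rw [Real.rpow_def_of_pos ht']
      simp only [BoundedContinuousFunction.smul_apply, smul_eq_mul, Complex.ofReal_exp]
      push_cast
      ring_nf
    rw [hval]
    refine norm_sum_exp_le P.coeff.support _ (r := fun lam => lam.1 ⬝ᵥ v) (fun lam => hv _ lam.2)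
      (fun y => ?_) (neg_nonneg.mpr (Real.log_nonpos t.2.1 t.2.2))
    refine le_of_eq_of_le (congrArg _ ?_) ((dilation hv 1 P).norm_coe_le_norm (x - y • v))
    rw [dilation_apply, BoundedContinuousFunction.sum_apply]
    refine Finset.sum_congr rfl fun lam _ => ?_
    simp only [BoundedContinuousFunction.smul_apply, smul_eq_mul, Set.Icc.coe_one,
      Real.one_rpow, Complex.ofReal_one, one_mul, apExp_apply, mul_assoc, ← Complex.exp_add,
      dotProduct_sub, dotProduct_smul]
    push_cast
    ring_nf
  rcases eq_or_lt_of_le (show 0 ≤ t from t.2.1) with rfl | ht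
  · have hcl : IsClosed {t | ‖dilation hv t P‖ ≤ ‖dilation hv 1 P‖} :=
      isClosed_le (continuous_dilation hv P).norm continuous_const
    have : (0 : unitInterval) ∈ closure (Set.Ioi 0) := by
      rw [closure_Ioi' ⟨1, zero_lt_one⟩]
      exact Set.self_mem_Ici
    exact closure_minimal (fun t ht => hpos t ht) hcl this
  · exact hpos t ht

end Dilation

/-! ### The Hermite property -/

section Hermite

variable {k : ℕ}

theorem exists_finset_mem_span_apExp {Λ : Set (Fin k → ℝ)} {p : APB k}
    (hp : p ∈ Submodule.span ℂ (apExp k '' Λ)) :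
    ∃ F : Finset (Fin k → ℝ), ↑F ⊆ Λ ∧ p ∈ Submodule.span ℂ (apExp k '' F) := by
  classical
  obtain ⟨T, hT, hpT⟩ := Submodule.mem_span_finite_of_mem_span hp
  obtain ⟨F, hF, rfl⟩ := Finset.subset_set_image_iff.mp hT
  exact ⟨F, hF, by rwa [← Finset.coe_image]⟩

/-- Frequencies in `Λ` that vanish or pair positively with `v`. -/
def positivePart (Λ : AddSubmonoid (Fin k → ℝ)) (v : Fin k → ℝ) : AddSubmonoid (Fin k → ℝ) where
  carrier := {lam | lam ∈ Λ ∧ (lam = 0 ∨ 0 < lam ⬝ᵥ v)}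
  zero_mem' := ⟨Λ.zero_mem, Or.inl rfl⟩
  add_mem' := by
    rintro lam μ ⟨hlam, hlam_pos⟩ ⟨hμ, hμ_pos⟩
    refine ⟨Λ.add_mem hlam hμ, ?_⟩
    rcases hlam_pos with rfl | hlam_pos
    · simpa using hμ_pos
    rcases hμ_pos with rfl | hμ_pos
    · simpa using Or.inr hlam_pos
    · exact Or.inr (by rw [add_dotProduct]; exact add_pos hlam_pos hμ_pos)

/-- The closed algebra of almost periodic functions with frequencies in `Λ`. -/
abbrev apClosure (Λ : AddSubmonoid (Fin k → ℝ)) : Subalgebra ℂ (APB k) :=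
  (Algebra.adjoin ℂ (apExp k '' Λ)).topologicalClosure

theorem span_apExp_le_apClosure {Λ Λ' : AddSubmonoid (Fin k → ℝ)} (h : Λ ≤ Λ') {f : APB k}
    (hf : f ∈ Submodule.span ℂ (apExp k '' Λ)) : f ∈ apClosure Λ' := by
  rw [← adjoin_apExp_toSubmodule] at hf
  exact Subalgebra.le_topologicalClosure _ (Algebra.adjoin_mono (Set.image_mono h) hf)

instance (Λ : AddSubmonoid (Fin k → ℝ)) : CompleteSpace (apClosure Λ) :=
  (Subalgebra.isClosed_topologicalClosure _).completeSpace_coe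

theorem isUnit_of_norm_one_sub_lt_one {A : Type*} [NormedRing A] [HasSummableGeomSeries A]
    {x : A} (hx : ‖1 - x‖ < 1) : IsUnit x := by
  simpa using isUnit_one_sub_of_norm_lt_one hx

theorem dense_span_apExp (Λ : AddSubmonoid (Fin k → ℝ)) :
    Dense {f : apClosure Λ | (f : APB k) ∈ Submodule.span ℂ (apExp k '' Λ)} := by
  intro f
  refine Metric.mem_closure_iff.mpr fun ε hε => ?_
  obtain ⟨p, hp, hfp⟩ := exists_span_norm_sub_lt f.2 hε
  refine ⟨⟨p, span_apExp_le_apClosure le_rfl hp⟩, hp, ?_⟩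
  rwa [Subtype.dist_eq, dist_eq_norm]

/-- Unimodular rows of trigonometric polynomials with frequencies in a halfspace can be
completed to invertible matrices. -/
theorem rowEquiv_single_of_trigPoly {n : Type*} [Fintype n] [DecidableEq n]
    {S : Set (Fin k → ℝ)} (hS : IsHalfspace k S) {Λ : AddSubmonoid (Fin k → ℝ)}
    (hΛS : (Λ : Set (Fin k → ℝ)) ⊆ S) (i₀ : n) {p q : n → apClosure Λ}
    (hp : ∀ i, (p i : APB k) ∈ Submodule.span ℂ (apExp k '' Λ))
    (hq : ∀ i, (q i : APB k) ∈ Submodule.span ℂ (apExp k '' Λ))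
    (hpq : ‖1 - p ⬝ᵥ q‖ < 1) : RowEquiv (Pi.single i₀ 1) p := by
  choose Fp hFp hpF using fun i => exists_finset_mem_span_apExp (hp i)
  choose Fq hFq hqF using fun i => exists_finset_mem_span_apExp (hq i)
  obtain ⟨v, hv⟩ := hS.exists_dotProduct_pos (F := (⋃ i, (Fp i : Set _)) ∪ ⋃ i, (Fq i : Set _))
    ((Set.finite_iUnion fun i => (Fp i).finite_toSet).union
      (Set.finite_iUnion fun i => (Fq i).finite_toSet))
    ((Set.union_subset (Set.iUnion_subset hFp) (Set.iUnion_subset hFq)).trans hΛS)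
  have hnonneg : ∀ lam ∈ positivePart Λ v, 0 ≤ lam ⬝ᵥ v := by
    rintro lam ⟨-, rfl | h⟩
    · simp
    · exact h.le
  have hzero : ∀ lam ∈ positivePart Λ v, lam ⬝ᵥ v = 0 → lam = 0 := fun lam hlam h =>
    hlam.2.resolve_right h.not_gt
  have hle : positivePart Λ v ≤ Λ := fun _ h => h.1
  choose P hP using fun i => exists_dilation_one_eq hnonneg <|
    Submodule.span_mono (Set.image_mono fun lam hlam => show lam ∈ positivePart Λ v from
      ⟨hFp i hlam, hv lam (Or.inl (Set.mem_iUnion_of_mem i hlam))⟩) (hpF i)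
  choose Q hQ using fun i => exists_dilation_one_eq hnonneg <|
    Submodule.span_mono (Set.image_mono fun lam hlam => show lam ∈ positivePart Λ v from
      ⟨hFq i hlam, hv lam (Or.inr (Set.mem_iUnion_of_mem i hlam))⟩) (hqF i)
  choose c hc using fun i => exists_dilation_zero_eq hnonneg hzero (P i)
  let path : (n → AddMonoidAlgebra ℂ (positivePart Λ v)) → unitInterval → n → apClosure Λ :=
    fun R t i => ⟨dilation hnonneg t (R i),
      span_apExp_le_apClosure hle (dilation_mem_span hnonneg t (R i))⟩
  have hcoe : ∀ t, ((1 - path P t ⬝ᵥ path Q t : apClosure Λ) : APB k) =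
      dilation hnonneg t (1 - P ⬝ᵥ Q) := by
    intro t
    simp [path, dotProduct, map_sum]
  have hPath : path P 1 = p := funext fun i => Subtype.ext (hP i)
  have hQath : path Q 1 = q := funext fun i => Subtype.ext (hQ i)
  have hunit : ∀ t, IsUnit (path P t ⬝ᵥ path Q t) := by
    intro t
    refine isUnit_of_norm_one_sub_lt_one (lt_of_le_of_lt ?_ hpq)
    rw [← hPath, ← hQath]
    change ‖((1 - path P t ⬝ᵥ path Q t : apClosure Λ) : APB k)‖ ≤
      ‖((1 - path P 1 ⬝ᵥ path Q 1 : apClosure Λ) : APB k)‖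
    rw [hcoe, hcoe]
    exact norm_dilation_le hnonneg t _
  have hcont : Continuous (path P) :=
    continuous_pi fun i => (continuous_dilation hnonneg (P i)).subtype_mk _
  have hP0 : path P 0 = fun i => algebraMap ℂ (apClosure Λ) (c i) :=
    funext fun i => Subtype.ext (hc i)
  have hc0 : c ≠ 0 := by
    rintro rfl
    have h := hunit 0
    rw [hP0] at h
    have h01 : (0 : apClosure Λ) = 1 := by simpa [dotProduct] using h
    simpa using DFunLike.congr_fun (congrArg Subtype.val h01) (0 : Fin k → ℝ)
  have h1 : RowEquiv (Pi.single i₀ 1) (path P 0) := hP0 ▸ RowEquiv.single_algebraMap i₀ hc0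
  exact h1.trans (hPath ▸ RowEquiv.of_path hcont hunit 0 1)

theorem rowEquiv_single_of_dotProduct_eq_one {n : Type*} [Fintype n] [DecidableEq n]
    {S : Set (Fin k → ℝ)} (hS : IsHalfspace k S) {Λ : AddSubmonoid (Fin k → ℝ)}
    (hΛS : (Λ : Set (Fin k → ℝ)) ⊆ S) (i₀ : n) {a b : n → apClosure Λ}
    (hab : a ⬝ᵥ b = 1) : RowEquiv (Pi.single i₀ 1) a := by
  have hdense : Dense (Set.univ.pi fun _ : n =>
      {f : apClosure Λ | (f : APB k) ∈ Submodule.span ℂ (apExp k '' Λ)}) :=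
    dense_pi _ fun _ _ => dense_span_apExp Λ
  have hopen : ∀ {F : (n → apClosure Λ) → apClosure Λ}, Continuous F →
      IsOpen {x | ‖1 - F x‖ < 1} := fun hF =>
    isOpen_lt (continuous_const.sub hF).norm continuous_const
  have hab_mem : ‖1 - a ⬝ᵥ b‖ < 1 := by
    rw [hab, sub_self, norm_zero]
    exact zero_lt_one
  obtain ⟨p, hp, hpb⟩ := hdense.exists_mem_open
    (hopen (F := fun x => x ⬝ᵥ b) (by unfold dotProduct; fun_prop)) ⟨a, hab_mem⟩
  obtain ⟨q, hq, hpq⟩ := hdense.exists_mem_open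
    (hopen (F := fun x => p ⬝ᵥ x) (by unfold dotProduct; fun_prop)) ⟨b, hpb⟩
  have h1 := rowEquiv_single_of_trigPoly hS hΛS i₀ (fun i => hp i trivial)
    (fun i => hq i trivial) hpq
  exact h1.trans <| .of_isUnit_dotProduct (isUnit_of_norm_one_sub_lt_one hpb)
    (hab ▸ isUnit_one)

end Hermite

/-- **Hermite property of `AP^k_Σ`** (Theorem 1.2 for `AP`).  Let `S ⊂ ℝ^k` be
a halfspace and `Σ ⊆ S` an additive semigroup containing `0`.  Then the unital
Banach algebra `AP^k_Σ` is an Hermite ring: every unimodular row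
`(a_0, …, a_m)` over `AP^k_Σ` is the first row of a matrix over `AP^k_Σ` that
is invertible over `AP^k_Σ`. -/
theorem ap_semigroup_hermite (k : ℕ) (S Sg : Set (Fin k → ℝ))
    (hS : IsHalfspace k S) (hSgS : Sg ⊆ S) (h0 : (0 : Fin k → ℝ) ∈ Sg)
    (hadd : ∀ x ∈ Sg, ∀ y ∈ Sg, x + y ∈ Sg) :
    ∀ (m : ℕ) (a b : Fin (m + 1) → APB k),
      (∀ i, APmem k Sg (a i)) → (∀ i, APmem k Sg (b i)) →
      (∑ i, a i * b i) = 1 →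
      ∃ M N : Matrix (Fin (m + 1)) (Fin (m + 1)) (APB k),
        (∀ i j, APmem k Sg (M i j)) ∧ (∀ i j, APmem k Sg (N i j)) ∧
        (∀ j, M 0 j = a j) ∧ M * N = 1 ∧ N * M = 1 := by

  intro m a b ha hb hab
  let Λ : AddSubmonoid (Fin k → ℝ) :=
    { carrier := Sg, zero_mem' := h0, add_mem' := fun hx hy => hadd _ hx _ hy }
  have hmem : ∀ f, APmem k Sg f ↔ f ∈ apClosure Λ := APmem_iff_mem_topologicalClosure Λ
  let a' : Fin (m + 1) → apClosure Λ := fun i => ⟨a i, (hmem _).mp (ha i)⟩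
  let b' : Fin (m + 1) → apClosure Λ := fun i => ⟨b i, (hmem _).mp (hb i)⟩
  have hab' : a' ⬝ᵥ b' = 1 := Subtype.ext (by simpa [a', b', dotProduct] using hab)
  obtain ⟨G, ⟨U, rfl⟩, hG⟩ := rowEquiv_single_of_dotProduct_eq_one hS hSgS 0 hab'
  let ψ := (apClosure Λ).val.toRingHom.mapMatrix (m := Fin (m + 1))
  refine ⟨ψ U, ψ ↑U⁻¹, fun i j => (hmem _).mpr (U.1 i j).2,
    fun i j => (hmem _).mpr (U⁻¹.1 i j).2, fun j => ?_, ?_, ?_⟩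
  · rw [Matrix.single_one_vecMul] at hG
    exact congrArg Subtype.val (congrFun hG j)
  · rw [← map_mul, Units.mul_inv, map_one]
  · rw [← map_mul, Units.inv_mul, map_one]
end
end

section
/- Let S ⊂ ℝ^k be a halfspace. Then there exists a unique vector Y ∈ ℝ^k of Euclidean unit length such that ⟨x, Y⟩ ≥ 0 for every x ∈ S, where ⟨·,·⟩ is the standard inner product on ℝ^k. -/
/- Almost periodic functions of `k` real variables, their Bohr-Fourier
coefficients and spectra, the Wiener algebra, and halfspaces. -/

open MeasureTheory Filter BoundedContinuousFunction

noncomputable section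

namespace IsHalfspace

variable {k : ℕ} {S : Set (Fin k → ℝ)}

theorem mem_or_neg_mem (hS : IsHalfspace k S) (x : Fin k → ℝ) : x ∈ S ∨ -x ∈ S := by
  have hx : x ∈ S ∪ -S := hS.union ▸ Set.mem_univ x
  simpa using hx

theorem eq_zero_of_mem_of_neg_mem (hS : IsHalfspace k S) {x : Fin k → ℝ} (hx : x ∈ S)
    (hx' : -x ∈ S) : x = 0 := by
  have h : x ∈ S ∩ -S := ⟨hx, hx'⟩
  rwa [hS.inter, Set.mem_singleton_iff] at h

theorem zero_mem (hS : IsHalfspace k S) : (0 : Fin k → ℝ) ∈ S := by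
  simpa using hS.mem_or_neg_mem 0

theorem convex (hS : IsHalfspace k S) : Convex ℝ S :=
  fun x hx y hy a b ha hb _ =>
    hS.add_mem _ (hS.smul_mem x hx a ha) _ (hS.smul_mem y hy b hb)

theorem interior_nonempty (hS : IsHalfspace k S) : (interior S).Nonempty := by
  rw [hS.convex.interior_nonempty_iff_affineSpan_eq_top, eq_top_iff]
  intro x _
  rcases hS.mem_or_neg_mem x with hx | hx
  · exact subset_affineSpan ℝ S hx
  · have h := AffineMap.lineMap_mem (-1 : ℝ) (subset_affineSpan ℝ S hS.zero_mem)
      (subset_affineSpan ℝ S hx)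
    simpa [AffineMap.lineMap_apply] using h

theorem zero_notMem_interior (hS : IsHalfspace k S) (hk : 0 < k) :
    (0 : Fin k → ℝ) ∉ interior S := by
  intro h
  rw [mem_interior_iff_mem_nhds, Metric.mem_nhds_iff] at h
  obtain ⟨ε, hε, hball⟩ := h
  have : Nonempty (Fin k) := ⟨⟨0, hk⟩⟩
  have hnorm : ‖(fun _ => ε / 2 : Fin k → ℝ)‖ < ε := by
    rw [pi_norm_const, Real.norm_of_nonneg (by positivity)]
    linarith
  have hzero := hS.eq_zero_of_mem_of_neg_mem
    (hball (mem_ball_zero_iff.2 hnorm)) (hball (mem_ball_zero_iff.2 (by rwa [norm_neg])))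
  have := congrFun hzero ⟨0, hk⟩
  simp only [Pi.zero_apply] at this
  linarith

/-- A halfspace lies on one side of some hyperplane through the origin. -/
theorem exists_ne_zero_dotProduct_nonneg (hS : IsHalfspace k S) (hk : 0 < k) :
    ∃ Y : Fin k → ℝ, Y ≠ 0 ∧ ∀ x ∈ S, 0 ≤ x ⬝ᵥ Y := by
  obtain ⟨f, hf, hfS⟩ := geometric_hahn_banach_of_nonempty_interior_point hS.convex
    (hS.zero_notMem_interior hk) hS.interior_nonempty
  have hdot : ∀ x, x ⬝ᵥ (fun j => -f (Pi.single j 1)) = -f x := fun x => by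
    conv_rhs => rw [pi_eq_sum_univ' x, map_sum]
    simp [dotProduct]
  refine ⟨fun j => -f (Pi.single j 1), fun h => hf ?_, fun x hx => ?_⟩
  · ext x
    simpa [h] using (hdot x).symm
  · rw [hdot]
    simpa using hfS x hx

/-- The open side of a supporting hyperplane of a halfspace is contained in the halfspace. -/
theorem mem_of_dotProduct_pos (hS : IsHalfspace k S) {Y x : Fin k → ℝ}
    (hY : ∀ x ∈ S, 0 ≤ x ⬝ᵥ Y) (hx : 0 < x ⬝ᵥ Y) : x ∈ S := by
  refine (hS.mem_or_neg_mem x).resolve_right fun h => ?_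
  have := hY _ h
  rw [neg_dotProduct] at this
  linarith

theorem unit_normal_unique (hS : IsHalfspace k S) {Y Z : Fin k → ℝ}
    (hY₁ : Y ⬝ᵥ Y = 1) (hZ₁ : Z ⬝ᵥ Z = 1)
    (hY : ∀ x ∈ S, 0 ≤ x ⬝ᵥ Y) (hZ : ∀ x ∈ S, 0 ≤ x ⬝ᵥ Z) : Y = Z := by
  have hcomm := dotProduct_comm Z Y
  have hYZ : 1 ≤ Y ⬝ᵥ Z := by
    by_contra! hlt
    have h := hZ (Y - Z) (hS.mem_of_dotProduct_pos hY (by rw [sub_dotProduct]; linarith))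
    rw [sub_dotProduct] at h
    linarith
  have hsq : (Y - Z) ⬝ᵥ (Y - Z) ≤ 0 := by
    simp only [sub_dotProduct, dotProduct_sub]
    linarith
  have hnonneg : 0 ≤ (Y - Z) ⬝ᵥ (Y - Z) := Finset.sum_nonneg fun i _ => mul_self_nonneg _
  exact sub_eq_zero.1 (dotProduct_self_eq_zero.1 (le_antisymm hsq hnonneg))

end IsHalfspace

/-- **Proposition 3.2.**  Let `S ⊂ ℝ^k` (`k ≥ 1`) be a halfspace.  Then there
is a unique vector `Y ∈ ℝ^k` of Euclidean unit length such that `⟨x, Y⟩ ≥ 0`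
for every `x ∈ S`. -/
theorem halfspace_exists_unique_unit_normal (k : ℕ) (hk : 0 < k)
    (S : Set (Fin k → ℝ)) (hS : IsHalfspace k S) :
    ∃! Y : Fin k → ℝ,
      Real.sqrt (∑ j, Y j ^ 2) = 1 ∧ ∀ x ∈ S, 0 ≤ ∑ j, x j * Y j := by
  have hunit : ∀ Y : Fin k → ℝ, Real.sqrt (∑ j, Y j ^ 2) = 1 ↔ Y ⬝ᵥ Y = 1 := fun Y => by
    simp only [Real.sqrt_eq_one, dotProduct, sq]
  obtain ⟨Y, hY₀, hY⟩ := hS.exists_ne_zero_dotProduct_nonneg hk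
  have hpos : 0 < Y ⬝ᵥ Y :=
    (Finset.sum_nonneg fun i _ => mul_self_nonneg (Y i)).lt_of_ne'
      (dotProduct_self_eq_zero.not.2 hY₀)
  have hY₁ : ((√(Y ⬝ᵥ Y))⁻¹ • Y) ⬝ᵥ ((√(Y ⬝ᵥ Y))⁻¹ • Y) = 1 := by
    rw [smul_dotProduct, dotProduct_smul, smul_eq_mul, smul_eq_mul, ← mul_assoc, ← mul_inv,
      Real.mul_self_sqrt hpos.le, inv_mul_cancel₀ hpos.ne']
  have hYS : ∀ x ∈ S, 0 ≤ x ⬝ᵥ ((√(Y ⬝ᵥ Y))⁻¹ • Y) := fun x hx => by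
    rw [dotProduct_smul]
    exact mul_nonneg (by positivity) (hY x hx)
  exact ⟨_, ⟨(hunit _).2 hY₁, hYS⟩, fun Z hZ =>
    hS.unit_normal_unique ((hunit Z).1 hZ.1) hY₁ hZ.2 hYS⟩
end
end
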